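/- Let N ≥ 1 and let T1 : 𝕋 → Matrix q₁ p₁ ℂ, T2 : 𝕋 → Matrix q₁ p₂ ℂ be continuous. Suppose: U_i : 𝕋 → Matrix q₁ p₂ ℂ is continuous and inner; U_o : 𝕋 → Matrix p₂ p₂ ℂ is continuous, in H∞, pointwise invertible with inverse in H∞, and T2 = U_i·U_o pointwise. Define Y := (I − U_iU_i^∼)T1; let γ > ‖Y‖∞ and let Y_o be continuous, pointwise invertible, with Y_o, Y_o⁻¹ ∈ H∞ and Y_oᴴY_o = γ²·I − YᴴY pointwise; define R := U_i^∼·T1·Y_o⁻¹. Let V₀, …, V_{N−1} be p₂×p₁ complex matrices and let V(z) := Σ_{i=0}^{N−1} V_i·z^{−i} for z ∈ 𝕋. Define R̂(V)(z) := z^N·R(z) − U_o(z)·(z^N·V(z))·Y_o(z)⁻¹. If D : 𝕋 → Matrix p₂ p₁ ℂ is continuous with D ∈ H∞, and X := U_o·D·Y_o⁻¹ satisfies ‖R̂(V) − X‖∞ ≤ 1, then ‖(T1 − T2·V) − (z^{−N}·T2)·D‖∞ ≤ γ; equivalently, the function Q(z) := V(z) + z^{−N}·D(z) satisfies ‖T1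 − T2·Q‖∞ ≤ γ. -/

import Mathlib

open Matrix

/-- The spectral norm (ℓ²→ℓ² operator norm, largest singular value) of a complex matrix. -/
noncomputable def specNorm {m n : Type*} [Fintype m] [Fintype n] [DecidableEq n]
    (M : Matrix m n ℂ) : ℝ :=
  ‖LinearMap.toContinuousLinearMap (Matrix.toEuclideanLin M)‖

/-- The `H∞` norm of a matrix-valued function on the unit circle:
`‖F‖∞ = sup_{z ∈ 𝕋} ‖F(z)‖`. -/
noncomputable def hinfNorm {m n : Type*} [Fintype m] [Fintype n] [DecidableEq n]
    (F : Circle → Matrix m n ℂ) : ℝ :=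
  ⨆ z : Circle, specNorm (F z)

/-- A matrix-valued function `F` on the unit circle belongs to `H∞` if there is a
matrix-valued function `G`, continuous on the closed unit disc and analytic on the open
unit disc, with `F(z) = G(z⁻¹)` for all `z` on the circle. -/
def MemHInf {m n : Type*} (F : Circle → Matrix m n ℂ) : Prop :=
  ∃ G : ℂ → Matrix m n ℂ,
    (∀ i j, ContinuousOn (fun w => G w i j) (Metric.closedBall (0 : ℂ) 1)) ∧
    (∀ i j, AnalyticOn ℂ (fun w => G w i j) (Metric.ball (0 : ℂ) 1)) ∧
    (∀ z : Circle, F z = G ((z : ℂ)⁻¹))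

/-- The distance from `R` to `H∞` in the `‖·‖∞` norm:
`dist(R, H∞) = inf { ‖R − X‖∞ : X continuous, X ∈ H∞ }`. -/
noncomputable def distHInf {m n : Type*} [Fintype m] [Fintype n] [DecidableEq n]
    (R : Circle → Matrix m n ℂ) : ℝ :=
  sInf {c : ℝ | ∃ X : Circle → Matrix m n ℂ,
    Continuous X ∧ MemHInf X ∧ c = hinfNorm fun z => R z - X z}

lemma specNorm_nonneg' {m n : Type*} [Fintype m] [Fintype n] [DecidableEq n]
    (M : Matrix m n ℂ) : 0 ≤ specNorm M := norm_nonneg _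

lemma specNorm_cont {m n : Type*} [Fintype m] [Fintype n] [DecidableEq n] :
    Continuous (fun M : Matrix m n ℂ => specNorm M) := by
  let L : Matrix m n ℂ →ₗ[ℂ] (EuclideanSpace ℂ n →L[ℂ] EuclideanSpace ℂ m) :=
    (LinearMap.toContinuousLinearMap.toLinearMap).comp
      (Matrix.toEuclideanLin (𝕜 := ℂ) (m := m) (n := n)).toLinearMap
  have hL : Continuous L := L.continuous_of_finiteDimensional
  exact continuous_norm.comp hL

lemma specNorm_le_hinfNorm {m n : Type*} [Fintype m] [Fintype n] [DecidableEq n]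
    (F : Circle → Matrix m n ℂ) (hF : Continuous F) (z : Circle) :
    specNorm (F z) ≤ hinfNorm F := by
  apply le_ciSup (f := fun z => specNorm (F z))
  exact (isCompact_range (specNorm_cont.comp hF)).bddAbove

lemma MemHInf.cont {m n : Type*} {F : Circle → Matrix m n ℂ} (h : MemHInf F) :
    Continuous F := by
  obtain ⟨G, hc, -, hG⟩ := h
  refine continuous_matrix fun i j => ?_
  have hz : Continuous (fun z : Circle => ((z : ℂ)⁻¹)) :=
    (continuous_subtype_val : Continuous fun z : Circle => (z : ℂ)).inv₀ (fun z => Circle.coe_ne_zero z)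
  have : (fun z => F z i j) = fun z : Circle => (fun w => G w i j) ((z : ℂ)⁻¹) := by
    funext z; rw [hG z]
  rw [this]
  exact (hc i j).comp_continuous hz (fun z => by simp [Circle.norm_coe z])

lemma norm_sq_toEuclideanLin {m n : Type*} [Fintype m] [Fintype n] [DecidableEq n]
    (M : Matrix m n ℂ) (x : EuclideanSpace ℂ n) :
    ((‖Matrix.toEuclideanLin M x‖ ^ 2 : ℝ) : ℂ)
      = star (x.ofLp) ⬝ᵥ ((Mᴴ * M) *ᵥ x.ofLp) := by
  have h := inner_self_eq_norm_sq_to_K (𝕜 := ℂ) (Matrix.toEuclideanLin M x)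
  rw [EuclideanSpace.inner_eq_star_dotProduct] at h
  push_cast
  rw [← Matrix.mulVec_mulVec, Matrix.dotProduct_mulVec, ← Matrix.star_mulVec, dotProduct_comm]
  exact h.symm

lemma pointwise_bound {q p r : ℕ} (E Y : Matrix (Fin q) (Fin p) ℂ)
    (S : Matrix (Fin r) (Fin p) ℂ) (Yo : Matrix (Fin p) (Fin p) ℂ) (γ : ℝ) (hγ : 0 ≤ γ)
    (hS : specNorm S ≤ 1)
    (hYo : Yoᴴ * Yo = ((γ : ℂ) ^ 2) • (1 : Matrix (Fin p) (Fin p) ℂ) - Yᴴ * Y)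
    (hE : Eᴴ * E = (S * Yo)ᴴ * (S * Yo) + Yᴴ * Y) : specNorm E ≤ γ := by
  refine ContinuousLinearMap.opNorm_le_bound _ hγ fun x => ?_
  change ‖Matrix.toEuclideanLin E x‖ ≤ γ * ‖x‖
  have h1 : ‖Matrix.toEuclideanLin (S * Yo) x‖ ≤ ‖Matrix.toEuclideanLin Yo x‖ := by
    have : Matrix.toEuclideanLin (S * Yo) x
        = LinearMap.toContinuousLinearMap (Matrix.toEuclideanLin S)
          (Matrix.toEuclideanLin Yo x) := by
      simp [Matrix.toEuclideanLin, Matrix.toLpLin_apply, Matrix.mulVec_mulVec]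
    rw [this]
    refine (ContinuousLinearMap.le_opNorm _ _).trans ?_
    exact mul_le_of_le_one_left (norm_nonneg _) hS
  have e1 : ‖Matrix.toEuclideanLin E x‖ ^ 2
      = ‖Matrix.toEuclideanLin (S * Yo) x‖ ^ 2 + ‖Matrix.toEuclideanLin Y x‖ ^ 2 := by
    have : ((‖Matrix.toEuclideanLin E x‖ ^ 2 : ℝ) : ℂ)
      = ((‖Matrix.toEuclideanLin (S * Yo) x‖ ^ 2 : ℝ) : ℂ)
        + ((‖Matrix.toEuclideanLin Y x‖ ^ 2 : ℝ) : ℂ) := by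
      simp only [norm_sq_toEuclideanLin]
      rw [hE, Matrix.add_mulVec, dotProduct_add]
    exact_mod_cast this
  have e2 : ‖Matrix.toEuclideanLin Yo x‖ ^ 2
      = γ ^ 2 * ‖x‖ ^ 2 - ‖Matrix.toEuclideanLin Y x‖ ^ 2 := by
    have hx : ((‖x‖ ^ 2 : ℝ) : ℂ) = star (x.ofLp) ⬝ᵥ x.ofLp := by
      have h := norm_sq_toEuclideanLin (1 : Matrix (Fin p) (Fin p) ℂ) x
      simpa [Matrix.toEuclideanLin, Matrix.toLpLin_apply] using h
    have : ((‖Matrix.toEuclideanLin Yo x‖ ^ 2 : ℝ) : ℂ)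
      = (γ : ℂ) ^ 2 * ((‖x‖ ^ 2 : ℝ) : ℂ)
        - ((‖Matrix.toEuclideanLin Y x‖ ^ 2 : ℝ) : ℂ) := by
      rw [hx]
      simp only [norm_sq_toEuclideanLin]
      rw [hYo, Matrix.sub_mulVec, dotProduct_sub, Matrix.smul_mulVec, Matrix.one_mulVec,
        dotProduct_smul, smul_eq_mul]
    exact_mod_cast this
  refine le_of_sq_le_sq ?_ (by positivity)
  have := pow_le_pow_left₀ (norm_nonneg _) h1 2
  nlinarith

lemma gram_split {q p r : ℕ} (E : Matrix (Fin q) (Fin p) ℂ) (U : Matrix (Fin q) (Fin r) ℂ)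
    (hU : Uᴴ * U = 1) :
    Eᴴ * E = (Uᴴ * E)ᴴ * (Uᴴ * E) + ((1 - U * Uᴴ) * E)ᴴ * ((1 - U * Uᴴ) * E) := by
  have hP : (1 - U * Uᴴ)ᴴ * (1 - U * Uᴴ) = 1 - U * Uᴴ := by
    have : U * Uᴴ * (U * Uᴴ) = U * Uᴴ := by
      rw [Matrix.mul_assoc, ← Matrix.mul_assoc Uᴴ, hU, Matrix.one_mul]
    simp [Matrix.conjTranspose_sub, Matrix.conjTranspose_mul, Matrix.mul_sub, Matrix.sub_mul, this]
  rw [Matrix.conjTranspose_mul (1 - U * Uᴴ) E, Matrix.mul_assoc,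
    ← Matrix.mul_assoc _ (1 - U * Uᴴ) E, hP]
  simp [Matrix.conjTranspose_mul, Matrix.mul_sub, Matrix.sub_mul, Matrix.mul_assoc]

/-- Distributed H∞ control subject to delays, `T3 = I` case (Theorem 3, part 2):
with `V(z) = Σ_{i<N} V_i z^{−i}` a FIR filter and
`R̂(V)(z) = z^N R(z) − U_o(z)(z^N V(z)) Y_o(z)⁻¹`, if `‖R̂(V) − X‖∞ ≤ 1`
with `X = U_o D Y_o⁻¹`, `D ∈ H∞`, then `‖(T1 − T2 V) − (z^{−N} T2) D‖∞ ≤ γ`;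
equivalently, `Q(z) = V(z) + z^{−N} D(z)` satisfies `‖T1 − T2 Q‖∞ ≤ γ`. -/
theorem distributed_hinf_identity_suboptimal (N : ℕ) (hN : 1 ≤ N) (q1 p1 p2 : ℕ)
    (T1 : Circle → Matrix (Fin q1) (Fin p1) ℂ) (hT1 : Continuous T1)
    (T2 : Circle → Matrix (Fin q1) (Fin p2) ℂ) (hT2 : Continuous T2)
    (Ui : Circle → Matrix (Fin q1) (Fin p2) ℂ) (hUic : Continuous Ui)
    (hUiInner : ∀ z, (Ui z)ᴴ * Ui z = 1)
    (Uo : Circle → Matrix (Fin p2) (Fin p2) ℂ) (hUoc : Continuous Uo)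
    (hUoH : MemHInf Uo) (hUoUnit : ∀ z, IsUnit (Uo z))
    (hUoInvH : MemHInf fun z => (Uo z)⁻¹)
    (hT2fact : ∀ z, T2 z = Ui z * Uo z)
    (Y : Circle → Matrix (Fin q1) (Fin p1) ℂ)
    (hY : Y = fun z => (1 - Ui z * (Ui z)ᴴ) * T1 z)
    (γ : ℝ) (hγ : hinfNorm Y < γ)
    (Yo : Circle → Matrix (Fin p1) (Fin p1) ℂ) (hYoc : Continuous Yo)
    (hYoUnit : ∀ z, IsUnit (Yo z)) (hYoH : MemHInf Yo)
    (hYoInvH : MemHInf fun z => (Yo z)⁻¹)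
    (hYofact : ∀ z, (Yo z)ᴴ * Yo z
      = ((γ : ℂ) ^ 2) • (1 : Matrix (Fin p1) (Fin p1) ℂ) - (Y z)ᴴ * Y z)
    (R : Circle → Matrix (Fin p2) (Fin p1) ℂ)
    (hR : R = fun z => (Ui z)ᴴ * T1 z * (Yo z)⁻¹)
    (V : Fin N → Matrix (Fin p2) (Fin p1) ℂ)
    (Vf : Circle → Matrix (Fin p2) (Fin p1) ℂ)
    (hVf : Vf = fun z : Circle => ∑ i : Fin N, ((z : ℂ)⁻¹) ^ (i : ℕ) • V i)
    (Rhat : Circle → Matrix (Fin p2) (Fin p1) ℂ)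
    (hRhat : Rhat = fun z : Circle =>
      ((z : ℂ) ^ N) • R z - Uo z * (((z : ℂ) ^ N) • Vf z) * (Yo z)⁻¹)
    (D : Circle → Matrix (Fin p2) (Fin p1) ℂ) (hDc : Continuous D) (hDH : MemHInf D)
    (X : Circle → Matrix (Fin p2) (Fin p1) ℂ)
    (hX : X = fun z => Uo z * D z * (Yo z)⁻¹)
    (hRX : hinfNorm (fun z => Rhat z - X z) ≤ 1) :
    hinfNorm (fun z : Circle =>
        (T1 z - T2 z * Vf z) - (((z : ℂ)⁻¹ ^ N) • T2 z) * D z) ≤ γ ∧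
    hinfNorm (fun z : Circle =>
        T1 z - T2 z * (Vf z + ((z : ℂ)⁻¹ ^ N) • D z)) ≤ γ := by
  have hYinvc : Continuous fun z => (Yo z)⁻¹ := hYoInvH.cont
  have hγ0 : 0 ≤ γ := (Real.iSup_nonneg (fun z => specNorm_nonneg' (Y z))).trans hγ.le
  have hzc : Continuous fun z : Circle => ((z : ℂ)) := continuous_subtype_val
  have hzic : Continuous (fun z : Circle => ((z : ℂ)⁻¹)) :=
    (continuous_subtype_val : Continuous fun z : Circle => (z : ℂ)).inv₀ (fun z => Circle.coe_ne_zero z)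
  have hVc : Continuous Vf := by
    rw [hVf]
    exact continuous_finsetSum _ fun i _ => (hzic.pow _).smul continuous_const
  have hRc : Continuous R := by
    rw [hR]
    exact (hUic.matrix_conjTranspose.matrix_mul hT1).matrix_mul hYinvc
  have hSc : Continuous fun z => Rhat z - X z := by
    rw [hRhat, hX]
    exact (((hzc.pow N).smul hRc).sub
      ((hUoc.matrix_mul ((hzc.pow N).smul hVc)).matrix_mul hYinvc)).sub
      ((hUoc.matrix_mul hDc).matrix_mul hYinvc)
  have key : ∀ z : Circle,
      specNorm (T1 z - T2 z * (Vf z + ((z : ℂ)⁻¹ ^ N) • D z)) ≤ γ := by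
    intro z
    have hS : specNorm (Rhat z - X z) ≤ 1 :=
      (specNorm_le_hinfNorm (fun z => Rhat z - X z) hSc z).trans hRX
    refine pointwise_bound _ (Y z) (Rhat z - X z) (Yo z) γ hγ0 hS (hYofact z) ?_
    set Q := Vf z + ((z : ℂ)⁻¹ ^ N) • D z with hQ
    have hz : (z : ℂ) ^ N ≠ 0 := pow_ne_zero _ z.coe_ne_zero
    have hYY : (Yo z)⁻¹ * Yo z = 1 :=
      Matrix.nonsing_inv_mul _ ((Matrix.isUnit_iff_isUnit_det _).1 (hYoUnit z))
    have hW : (Ui z)ᴴ * (T1 z - T2 z * Q) = (Ui z)ᴴ * T1 z - Uo z * Q := by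
      rw [Matrix.mul_sub, hT2fact z, Matrix.mul_assoc (Ui z), ← Matrix.mul_assoc (Ui z)ᴴ (Ui z),
        hUiInner z, Matrix.one_mul]
    have hSY : (Rhat z - X z) * Yo z = ((z : ℂ) ^ N) • ((Ui z)ᴴ * (T1 z - T2 z * Q)) := by
      have hzz : ((z : ℂ) ^ N) • Q = ((z : ℂ) ^ N) • Vf z + D z := by
        rw [hQ, smul_add, smul_smul, inv_pow, mul_inv_cancel₀ hz, one_smul]
      rw [hW, smul_sub, ← Matrix.mul_smul (Uo z), hzz, hRhat, hX, hR]
      simp only [Matrix.sub_mul, Matrix.smul_mul, Matrix.mul_assoc, hYY, Matrix.mul_one,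
        Matrix.mul_add]
      abel
    have hYE : (1 - Ui z * (Ui z)ᴴ) * (T1 z - T2 z * Q) = Y z := by
      have h0 : (1 - Ui z * (Ui z)ᴴ) * Ui z = 0 := by
        rw [Matrix.sub_mul, Matrix.mul_assoc, hUiInner z]; simp
      rw [Matrix.mul_sub, hT2fact z, ← Matrix.mul_assoc, ← Matrix.mul_assoc, h0, hY]
      simp
    have hzn : star ((z : ℂ) ^ N) * (z : ℂ) ^ N = 1 := by
      have : star (z : ℂ) * (z : ℂ) = 1 := by
        have := Complex.normSq_eq_conj_mul_self (z := (z : ℂ))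
        rw [Circle.normSq_coe] at this
        simpa using this.symm
      rw [star_pow, ← mul_pow, this, one_pow]
    rw [gram_split _ (Ui z) (hUiInner z), hYE, hSY, Matrix.conjTranspose_smul, Matrix.smul_mul,
      Matrix.mul_smul, smul_smul, hzn, one_smul]
  have k2 : hinfNorm (fun z : Circle =>
        T1 z - T2 z * (Vf z + ((z : ℂ)⁻¹ ^ N) • D z)) ≤ γ := ciSup_le key
  refine ⟨?_, k2⟩
  have : (fun z : Circle => (T1 z - T2 z * Vf z) - (((z : ℂ)⁻¹ ^ N) • T2 z) * D z)
      = fun z : Circle => T1 z - T2 z * (Vf z + ((z : ℂ)⁻¹ ^ N) • D z) := by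
    funext z
    rw [Matrix.mul_add, Matrix.mul_smul, Matrix.smul_mul, sub_sub]
  rw [this]
  exact k2
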